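/- Let 0 ≤ r ≤ 7. There is no pair of classes β′, β″ ∈ ℤ^{1+r} satisfying β′ + β″ = −K, p_a(β′) ≥ 1, (−K)·β′ ≥ 1, and (−K)·β″ ≥ 1. -/

import Mathlib

/-!
The obstruction is the Hodge index inequality. Put `n = (−K)·β'`. The genus condition says
`β'·β' ≥ n`, while `hodge_index` gives `(β'·β') (9 − r) ≤ n²`; as `n > 0`, this forces
`n ≥ 9 − r = (−K)·(−K)`. Then `(−K)·β'' = (9 − r) − n ≤ 0`, against the last condition.
-/

/-- Intersection pairing on the Picard lattice of `S_r`, with classes written in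
`(d; a_1, …, a_r)` coordinates (the class `d·h − ∑ a_i·e_i`):
`(d; a)·(d'; a') = d·d' − ∑ a_i·a_i'`. -/
def inter {r : ℕ} (x y : ℤ × (Fin r → ℤ)) : ℤ :=
  x.1 * y.1 - ∑ i, x.2 i * y.2 i

/-- The canonical class `K = (−3; −1, …, −1)` of `S_r`. -/
def Kcl (r : ℕ) : ℤ × (Fin r → ℤ) := (-3, fun _ => -1)

/-- A line class: `l·l = −1` and `(−K)·l = 1`. -/
def IsLine {r : ℕ} (l : ℤ × (Fin r → ℤ)) : Prop :=
  inter l l = -1 ∧ inter (-(Kcl r)) l = 1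

/-- A conic class: `C·C = 0` and `(−K)·C = 2`. -/
def IsConic {r : ℕ} (C : ℤ × (Fin r → ℤ)) : Prop :=
  inter C C = 0 ∧ inter (-(Kcl r)) C = 2

/-- Arithmetic genus `p_a(β) = β·(β+K)/2 + 1`. -/
def pa {r : ℕ} (β : ℤ × (Fin r → ℤ)) : ℤ :=
  inter β (β + Kcl r) / 2 + 1

/-- The Hodge index inequality for the class `−K`, whose self-intersection is `9 − r`. It reduces to
the Cauchy–Schwarz inequality `(∑ a_i)² ≤ r ∑ a_i²`. -/
theorem hodge_index {r : ℕ} (hr : r ≤ 9) (β : ℤ × (Fin r → ℤ)) :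
    inter β β * (9 - r) ≤ inter (-(Kcl r)) β ^ 2 := by
  obtain ⟨d, a⟩ := β
  rcases Nat.eq_zero_or_pos r with rfl | hpos
  · simp [inter, Kcl]
    linarith
  have hcs : (∑ i, a i) ^ 2 ≤ (r : ℤ) * ∑ i, a i ^ 2 := by
    simpa using sq_sum_le_card_mul_sum_sq (s := Finset.univ) (f := a)
  have hr' : (r : ℤ) ≤ 9 := by exact_mod_cast hr
  have hpos' : (0 : ℤ) < r := by exact_mod_cast hpos
  simp only [inter, Kcl, Prod.fst_neg, Prod.snd_neg, Pi.neg_apply, neg_neg, one_mul, ← pow_two]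
  generalize ∑ i, a i = s at *
  generalize ∑ i, a i ^ 2 = A at *
  -- `r` times the difference of the two sides is `(r d − 3 s)² + (9 − r) (r A − s²)`.
  refine le_of_mul_le_mul_left ?_ hpos'
  nlinarith [sq_nonneg (r * d - 3 * s), mul_nonneg (sub_nonneg.2 hr') (sub_nonneg.2 hcs)]

/-- for `0 ≤ r ≤ 7`, the anticanonical class of `S_r` admits no
decomposition `−K = β′ + β″` with `p_a(β′) ≥ 1`, `(−K)·β′ ≥ 1` and `(−K)·β″ ≥ 1`. -/
theorem anticanonical_no_wall_decomposition (r : ℕ) (hr : r ≤ 7) :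
    ¬ ∃ β' β'' : ℤ × (Fin r → ℤ), β' + β'' = -(Kcl r) ∧ 1 ≤ pa β' ∧
      1 ≤ inter (-(Kcl r)) β' ∧ 1 ≤ inter (-(Kcl r)) β'' := by
  rintro ⟨β', β'', hsum, hpa, h', h''⟩
  have hK : inter (-(Kcl r)) β' + inter (-(Kcl r)) β'' = 9 - r := by
    obtain rfl : β'' = -(Kcl r) - β' := eq_sub_of_add_eq' hsum
    simp [inter, Kcl, Finset.sum_sub_distrib]
    ring
  have hgenus : inter (-(Kcl r)) β' ≤ inter β' β' := by
    have hadd : inter β' (β' + Kcl r) = inter β' β' - inter (-(Kcl r)) β' := by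
      simp [inter, Kcl, mul_add, Finset.sum_add_distrib]
      ring
    unfold pa at hpa
    omega
  have hhodge := hodge_index (by omega : r ≤ 9) β'
  have hr' : (r : ℤ) ≤ 7 := by exact_mod_cast hr
  have hn : inter (-(Kcl r)) β' * (9 - r) ≤ inter (-(Kcl r)) β' * inter (-(Kcl r)) β' := by
    rw [← pow_two]
    exact (mul_le_mul_of_nonneg_right hgenus (by linarith)).trans hhodge
  have hle := le_of_mul_le_mul_left hn (by linarith)
  linarith
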